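/- Let 0 < a < b < 1 with a + b = 1, let (d_n)_{n∈ℤ} be a bounded sequence of positive real numbers, and set t_n = √((n+a)/(n+b)) and c_n = √((n+1−a)/(n+1−b))·d_{n+1} − √((n+a)/(n+b))·d_n for n ∈ ℤ. Suppose that d_n = d_{−n} for all n ∈ ℤ and that for every n ∈ ℤ: √((n+a)/(n+b))·c_n·[(1+d_n²)·(n−a)/(n−b) + (1+d_{n−1}²)·(n−b)/(n−a) − 2d_{n−1}d_n] ≠ √((n−b)/(n−a))·c_{n−1}·[(1−d_n²)·(n+a)/(n+b) − (1+d_{n+1}²)·(n+b)/(n+a) + 2d_n d_{n+1}]. Then the bounded block-shift operator T = T(√((n+a)/(n+b)), d_n) on H ⊕ H is irreducible. -/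

import Mathlib

noncomputable section

open Complex Metric

/-- `ℓ²(ℤ)` over `ℂ`. -/
abbrev Hl : Type := lp (fun _ : ℤ => ℂ) 2

/-- The standard orthonormal basis of `ℓ²(ℤ)`. -/
def eb (n : ℤ) : Hl := lp.single 2 n 1

/-- The Hilbert space direct sum `H ⊕ H`. -/
abbrev H2 : Type := WithLp 2 (Hl × Hl)

/-- A bounded operator on a Hilbert space is irreducible if the only closed subspaces
invariant under both it and its adjoint are `⊥` and `⊤`. -/
def IsIrreducibleOp {E : Type*} [NormedAddCommGroup E] [InnerProductSpace ℂ E] [CompleteSpace E]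
    (A : E →L[ℂ] E) : Prop :=
  ∀ K : Submodule ℂ E, IsClosed (K : Set E) →
    (∀ x ∈ K, A x ∈ K) → (∀ x ∈ K, ContinuousLinearMap.adjoint A x ∈ K) →
    K = ⊥ ∨ K = ⊤

/-- The block operator `(x, y) ↦ (T₀ x + (X T₁ − T₀ X) y, T₁ y)` on the Hilbert space
direct sum `H₀ ⊕ H₁`. -/
def blockT2 {H0 H1 : Type*} [NormedAddCommGroup H0] [NormedSpace ℂ H0]
    [NormedAddCommGroup H1] [NormedSpace ℂ H1]
    (T0 : H0 →L[ℂ] H0) (T1 : H1 →L[ℂ] H1) (X : H1 →L[ℂ] H0) :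
    WithLp 2 (H0 × H1) →L[ℂ] WithLp 2 (H0 × H1) :=
  let E := WithLp.prodContinuousLinearEquiv 2 ℂ H0 H1
  (E.symm.toContinuousLinearMap).comp
    ((((T0.comp (ContinuousLinearMap.fst ℂ H0 H1)) +
        ((X.comp T1 - T0.comp X).comp (ContinuousLinearMap.snd ℂ H0 H1))).prod
      (T1.comp (ContinuousLinearMap.snd ℂ H0 H1))).comp E.toContinuousLinearMap)

/-- The block operator `T(wₙ, vₙ, dₙ)` on `ℓ²(ℤ) ⊕ ℓ²(ℤ)`. -/
def blockT (T0 T1 X : Hl →L[ℂ] Hl) : H2 →L[ℂ] H2 := blockT2 T0 T1 X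

section
open Filter Topology

def tauP (t : ℤ → ℝ) (i : ℤ) (n : ℕ) : ℝ := ∏ m ∈ Finset.range n, t (i + m)
def xP (t d : ℤ → ℝ) (i : ℤ) (n : ℕ) : ℝ := d (i + n) - tauP t i n ^ 2 * d i
def stepM (t d : ℤ → ℝ) (n : ℤ) : Matrix (Fin 2) (Fin 2) ℂ :=
  !![(t n : ℂ), (d (n+1) : ℂ) / t n - t n * d n; 0, 1 / (t n : ℂ)]
def prodM (t d : ℤ → ℝ) (i : ℤ) (n : ℕ) : Matrix (Fin 2) (Fin 2) ℂ :=
  !![(tauP t i n : ℂ), (xP t d i n : ℂ) / tauP t i n; 0, 1 / (tauP t i n : ℂ)]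
def gramM (t d : ℤ → ℝ) (i : ℤ) (n : ℕ) : Matrix (Fin 2) (Fin 2) ℂ :=
  !![(tauP t i n : ℂ)^2, (xP t d i n : ℂ); (xP t d i n : ℂ),
    (1 + (xP t d i n : ℂ)^2) / (tauP t i n : ℂ)^2]

lemma tauP_ne {t : ℤ → ℝ} (ht : ∀ n, t n ≠ 0) (i : ℤ) (n : ℕ) : tauP t i n ≠ 0 :=
  Finset.prod_ne_zero_iff.mpr fun _ _ => ht _

lemma tauP_succ (t : ℤ → ℝ) (i : ℤ) (n : ℕ) : tauP t i (n+1) = tauP t i n * t (i+n) :=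
  Finset.prod_range_succ _ _

lemma tauP_add (t : ℤ → ℝ) (i : ℤ) (n k : ℕ) :
    tauP t i (n+k) = tauP t i n * tauP t (i+n) k := by
  unfold tauP
  rw [Finset.prod_range_add]
  congr 1
  apply Finset.prod_congr rfl
  intro m _
  push_cast
  rw [add_assoc]

lemma prodM_zero (t d : ℤ → ℝ) (i : ℤ) : prodM t d i 0 = 1 := by
  ext a b; fin_cases a <;> fin_cases b <;> simp [prodM, tauP, xP]

lemma prodM_succ (t d : ℤ → ℝ) (ht : ∀ n, t n ≠ 0) (i : ℤ) (n : ℕ) :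
    prodM t d i (n+1) = stepM t d (i+n) * prodM t d i n := by
  have h1 : (tauP t i n : ℂ) ≠ 0 := by exact_mod_cast tauP_ne ht i n
  have h2 : (t (i+n) : ℂ) ≠ 0 := by exact_mod_cast ht _
  have h3 : i + (n+1) = i + n + 1 := by ring
  ext a b; fin_cases a <;> fin_cases b <;>
    simp [prodM, stepM, xP, tauP_succ, Matrix.mul_apply, Fin.sum_univ_two, h3] <;>
    field_simp <;> ring

lemma gram_eq (t d : ℤ → ℝ) (ht : ∀ n, t n ≠ 0) (i : ℤ) (n : ℕ) :
    (prodM t d i n).conjTranspose * prodM t d i n = gramM t d i n := by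
  have h1 : (tauP t i n : ℂ) ≠ 0 := by exact_mod_cast tauP_ne ht i n
  ext a b; fin_cases a <;> fin_cases b <;>
    simp [prodM, gramM, Matrix.mul_apply, Fin.sum_univ_two, Matrix.conjTranspose_apply] <;>
    field_simp <;> try ring

lemma det_step (t d : ℤ → ℝ) (ht : ∀ n, t n ≠ 0) (i : ℤ) : (stepM t d i).det = 1 := by
  have h2 : (t i : ℂ) ≠ 0 := by exact_mod_cast ht _
  simp [stepM, Matrix.det_fin_two, h2]

section fam
variable {t d : ℤ → ℝ} (ht : ∀ n, t n ≠ 0) {P : ℤ → ℤ → Matrix (Fin 2) (Fin 2) ℂ}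
  (h1 : ∀ i j, P (i+1) (j+1) * stepM t d j = stepM t d i * P i j)
  (h2 : ∀ i j, P i j * (stepM t d j).conjTranspose = (stepM t d i).conjTranspose * P (i+1) (j+1))

include ht h1 in
lemma fam1 (i j : ℤ) (n : ℕ) :
    P (i+n) (j+n) * prodM t d j n = prodM t d i n * P i j := by
  induction n with
  | zero => simp [prodM_zero]
  | succ n ih =>
    have := h1 (i+n) (j+n)
    rw [prodM_succ t d ht, prodM_succ t d ht, Matrix.mul_assoc, ← ih, ← Matrix.mul_assoc,
      ← Matrix.mul_assoc, ← this]
    push_cast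
    simp only [add_assoc]

include ht h2 in
lemma fam2 (i j : ℤ) (n : ℕ) :
    P i j * (prodM t d j n).conjTranspose = (prodM t d i n).conjTranspose * P (i+n) (j+n) := by
  induction n with
  | zero => simp [prodM_zero]
  | succ n ih =>
    have := h2 (i+n) (j+n)
    rw [prodM_succ t d ht, prodM_succ t d ht, Matrix.conjTranspose_mul, Matrix.conjTranspose_mul,
      ← Matrix.mul_assoc, ih, Matrix.mul_assoc, this, Matrix.mul_assoc]
    push_cast
    simp only [add_assoc]

include ht h1 h2 in
lemma fam_gram (i j : ℤ) (n : ℕ) : P i j * gramM t d j n = gramM t d i n * P i j := by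
  rw [← gram_eq t d ht, ← gram_eq t d ht, ← Matrix.mul_assoc, fam2 ht h2, Matrix.mul_assoc,
    fam1 ht h1, Matrix.mul_assoc]

include ht h1 in
lemma fam_det (i j : ℤ) : (P (i+1) (j+1)).det = (P i j).det := by
  have := congrArg Matrix.det (h1 i j)
  simpa [Matrix.det_mul, det_step t d ht] using this

include ht h1 in
lemma fam_det_n (i j : ℤ) (n : ℕ) : (P (i+n) (j+n)).det = (P i j).det := by
  induction n with
  | zero => simp
  | succ n ih =>
    rw [← ih, ← fam_det ht h1 (i+n) (j+n)]; push_cast; simp only [add_assoc]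

lemma gram_ev (hd0 : ∀ n, 0 < d n) {C : ℝ} (hdC : ∀ n, d n ≤ C) (ht : ∀ n, t n ≠ 0)
    {i : ℤ} (hτ : Tendsto (tauP t i) atTop (𝓝 0))
    (hc : ¬ (d (i+1) = t i ^ 2 * d i ∧ d (i+2) = t (i+1) ^ 2 * d (i+1)))
    (v w : ℂ) (hvw : v ≠ 0 ∨ w ≠ 0)
    (h : ∀ n, (xP t d i n : ℂ) * (v^2 - w^2) +
      ((1 + (xP t d i n : ℂ)^2) / (tauP t i n : ℂ)^2 - (tauP t i n : ℂ)^2) * (v * w) = 0) :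
    False := by
  by_cases hz : v * w = 0
  · have hne : v^2 - w^2 ≠ 0 := by
      rcases mul_eq_zero.mp hz with h0 | h0 <;> subst h0 <;> simpa using hvw
    have hx : ∀ n, xP t d i n = 0 := by
      intro n
      have := h n
      rw [hz, mul_zero, add_zero] at this
      exact_mod_cast (mul_eq_zero.mp this).resolve_right hne
    have e1 := hx 1
    have e2 := hx 2
    simp [xP, tauP, Finset.prod_range_succ] at e1 e2
    apply hc
    have e1' : d (i+1) = t i ^ 2 * d i := by linarith
    refine ⟨e1', ?_⟩
    rw [e1']; linear_combination e2
  · have hxb : ∀ᶠ n in atTop, ‖(xP t d i n : ℂ)‖ ≤ 2 * C := by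
      have : ∀ᶠ n in atTop, |tauP t i n| < 1 := by
        have := hτ.abs
        simp only [abs_zero] at this
        exact this.eventually (gt_mem_nhds one_pos)
      filter_upwards [this] with n hn
      rw [Complex.norm_real, Real.norm_eq_abs]
      have hs : tauP t i n ^ 2 ≤ 1 := by rw [← sq_abs]; nlinarith [abs_nonneg (tauP t i n)]
      have := hd0 (i+n); have := hdC (i+n); have := hd0 i; have := hdC i
      unfold xP
      rw [abs_le]
      constructor <;> nlinarith [sq_nonneg (tauP t i n)]
    have hτc : Tendsto (fun n => (tauP t i n : ℂ)^2) atTop (𝓝 0) := by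
      have : Tendsto (fun n => (tauP t i n : ℂ)) atTop (𝓝 ((0:ℝ):ℂ)) :=
        (Complex.continuous_ofReal.tendsto 0).comp hτ
      simpa using this.pow 2
    have hlim : Tendsto (fun n => (tauP t i n : ℂ)^2 * (tauP t i n : ℂ)^2
        - ((tauP t i n : ℂ)^2 * (xP t d i n : ℂ)) * ((v^2 - w^2) / (v * w))) atTop (𝓝 0) := by
      have hA : Tendsto (fun n => (tauP t i n : ℂ)^2 * (xP t d i n : ℂ)) atTop (𝓝 0) :=
        hτc.zero_mul_isBoundedUnder_le ⟨2*C, by simpa using hxb⟩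
      simpa using (hτc.mul hτc).sub (hA.mul_const ((v^2 - w^2) / (v * w)))
    have heq : ∀ n, ((1 + (xP t d i n)^2 : ℝ) : ℂ) = (tauP t i n : ℂ)^2 * (tauP t i n : ℂ)^2
        - ((tauP t i n : ℂ)^2 * (xP t d i n : ℂ)) * ((v^2 - w^2) / (v * w)) := by
      intro n
      have h1 : (tauP t i n : ℂ) ≠ 0 := by exact_mod_cast tauP_ne ht i n
      have hv : v ≠ 0 := left_ne_zero_of_mul hz
      have hw : w ≠ 0 := right_ne_zero_of_mul hz
      have := h n
      field_simp at this ⊢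
      push_cast
      linear_combination this
    have : Tendsto (fun n => ‖((1 + (xP t d i n)^2 : ℝ) : ℂ)‖) atTop (𝓝 0) := by
      simpa [heq] using hlim.norm
    have h1 := this.eventually (gt_mem_nhds one_pos)
    obtain ⟨n, hn⟩ := h1.exists
    rw [Complex.norm_real, Real.norm_eq_abs, abs_lt] at hn
    nlinarith [sq_nonneg (xP t d i n), hn.2]

/-- A singular intertwiner vanishes. -/
lemma sing_zero (hd0 : ∀ n, 0 < d n) {C : ℝ} (hdC : ∀ n, d n ≤ C) (ht : ∀ n, t n ≠ 0)
    {i j : ℤ} (hτ : Tendsto (tauP t j) atTop (𝓝 0))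
    (hc : ¬ (d (j+1) = t j ^ 2 * d j ∧ d (j+2) = t (j+1) ^ 2 * d (j+1)))
    (Q : Matrix (Fin 2) (Fin 2) ℂ) (hQ : ∀ n, Q * gramM t d j n = gramM t d i n * Q)
    (hdet : Q.det = 0) : Q = 0 := by
  obtain ⟨v, hv0, hv⟩ := Matrix.exists_mulVec_eq_zero_iff.mpr hdet
  have hvw : v 0 ≠ 0 ∨ v 1 ≠ 0 := by
    by_contra hcon
    push Not at hcon
    apply hv0; ext a; fin_cases a <;> simp [hcon]
  by_contra hQ0
  refine gram_ev hd0 hdC ht hτ hc (v 0) (v 1) hvw ?_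
  intro n
  by_contra hw
  have hG : Q.mulVec ((gramM t d j n).mulVec v) = 0 := by
    rw [Matrix.mulVec_mulVec, hQ, ← Matrix.mulVec_mulVec, hv, Matrix.mulVec_zero]
  apply hQ0
  ext a b
  have e1 := congrFun hv a
  have e2 := congrFun hG a
  simp only [Matrix.mulVec, dotProduct, Fin.sum_univ_two, gramM, Matrix.of_apply, Matrix.cons_val',
    Matrix.cons_val_zero, Matrix.cons_val_one, Pi.zero_apply, Matrix.cons_val_fin_one] at e1 e2
  have f0 : Q a 0 = 0 := by
    refine (mul_eq_zero.mp (?_ : Q a 0 * _ = 0)).resolve_right hw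
    linear_combination ((xP t d j n : ℂ) * v 0 +
      (1 + (xP t d j n : ℂ)^2) / (tauP t j n : ℂ)^2 * v 1) * e1 - v 1 * e2
  have f1 : Q a 1 = 0 := by
    refine (mul_eq_zero.mp (?_ : Q a 1 * _ = 0)).resolve_right hw
    linear_combination (-((tauP t j n : ℂ)^2 * v 0 + (xP t d j n : ℂ) * v 1)) * e1 + v 0 * e2
  fin_cases b <;> simp [f0, f1]

lemma trace_eq {i j : ℤ} {n : ℕ} (Q : Matrix (Fin 2) (Fin 2) ℂ)
    (hQ : Q * gramM t d j n = gramM t d i n * Q) (hdet : Q.det ≠ 0) :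
    tauP t i n ^ 2 + (1 + xP t d i n ^ 2) / tauP t i n ^ 2 =
    tauP t j n ^ 2 + (1 + xP t d j n ^ 2) / tauP t j n ^ 2 := by
  have hu : IsUnit Q.det := isUnit_iff_ne_zero.mpr hdet
  have h1 : gramM t d i n = Q * gramM t d j n * Q⁻¹ := by
    rw [hQ, Matrix.mul_assoc, Matrix.mul_nonsing_inv _ hu, Matrix.mul_one]
  have h2 : (gramM t d i n).trace = (gramM t d j n).trace := by
    rw [h1, Matrix.trace_mul_comm, ← Matrix.mul_assoc, Matrix.nonsing_inv_mul _ hu, Matrix.one_mul]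
  simp only [Matrix.trace_fin_two, gramM, Matrix.of_apply, Matrix.cons_val',
    Matrix.cons_val_zero, Matrix.cons_val_one, Matrix.cons_val_fin_one] at h2
  exact_mod_cast h2

lemma F_lim (hd0 : ∀ n, 0 < d n) {C : ℝ} (hdC : ∀ n, d n ≤ C)
    {i : ℤ} (hτ : Tendsto (tauP t i) atTop (𝓝 0)) {ε : ℝ} (hε : 0 < ε) :
    ∀ᶠ n in atTop, |(tauP t i n ^ 4 + 1 + xP t d i n ^ 2) - (1 + d (i+n) ^ 2)| < ε := by
  have hb : Tendsto (fun n => tauP t i n ^ 2 * d (i+n)) atTop (𝓝 0) := by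
    have h2 : Tendsto (fun n => tauP t i n ^ 2) atTop (𝓝 0) := by simpa using hτ.pow 2
    refine h2.zero_mul_isBoundedUnder_le ⟨C, ?_⟩
    simp only [eventually_map, Function.comp]
    refine Eventually.of_forall fun n => ?_
    rw [Real.norm_eq_abs, abs_of_pos (hd0 _)]; exact hdC _
  have h4 : Tendsto (fun n => tauP t i n ^ 4) atTop (𝓝 0) := by simpa using hτ.pow 4
  have : Tendsto (fun n => |(tauP t i n ^ 4 + 1 + xP t d i n ^ 2) - (1 + d (i+n) ^ 2)|)
      atTop (𝓝 0) := by
    have h5 := ((h4.mul_const (1 + d i ^ 2)).sub (hb.mul_const (2 * d i))).abs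
    simp only [zero_mul, sub_zero, abs_zero] at h5
    refine h5.congr fun n => ?_
    unfold xP
    congr 1; ring
  exact this.eventually (gt_mem_nhds hε)

lemma trace_contra (hd0 : ∀ n, 0 < d n) {C : ℝ} (hdC : ∀ n, d n ≤ C) (ht : ∀ n, 0 < t n)
    (hmono : ∀ i j, 0 ≤ i → i < j → t i < t j)
    (hτ : ∀ i, 0 ≤ i → Tendsto (tauP t i) atTop (𝓝 0))
    {j : ℤ} (hj : 0 ≤ j) {k : ℕ} (hk : 0 < k)
    (htr : ∀ n, tauP t (j+k) n ^ 2 + (1 + xP t d (j+k) n ^ 2) / tauP t (j+k) n ^ 2 =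
      tauP t j n ^ 2 + (1 + xP t d j n ^ 2) / tauP t j n ^ 2) : False := by
  have hpos : ∀ i n, 0 < tauP t i n := fun i n => Finset.prod_pos fun _ _ => ht _
  set R := (tauP t (j+1) k / tauP t j k) ^ 2 with hR
  have hlt : tauP t j k < tauP t (j+1) k := by
    unfold tauP
    apply Finset.prod_lt_prod_of_nonempty
    · exact fun _ _ => ht _
    · intro m _; apply hmono <;> omega
    · simpa using hk.ne'
  have hR1 : 1 < R := by
    have : 1 < tauP t (j+1) k / tauP t j k := (one_lt_div (hpos _ _)).mpr hlt
    rw [hR]; nlinarith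
  have hρ : ∀ n : ℕ, 1 ≤ n → R * tauP t j n ^ 2 ≤ tauP t (j+k) n ^ 2 := by
    intro n hn
    have e1 := tauP_add t j n k
    have e2 := tauP_add t j k n
    rw [add_comm k n, e1] at e2
    have h3 : tauP t (j+1) k ≤ tauP t (j+n) k := by
      unfold tauP
      apply Finset.prod_le_prod
      · exact fun _ _ => (ht _).le
      · intro m _
        rcases hn.eq_or_lt with h | h
        · subst h; simp
        · apply le_of_lt; apply hmono <;> omega
    have h4 : tauP t (j+k) n = tauP t j n * tauP t (j+n) k / tauP t j k := by
      rw [eq_div_iff (hpos _ _).ne', e2]; ring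
    have h5 : tauP t (j+1) k / tauP t j k * tauP t j n ≤ tauP t (j+k) n := by
      rw [h4, div_mul_eq_mul_div, mul_comm (tauP t j n)]
      have := hpos j n; have := hpos j k
      gcongr
    rw [hR, ← mul_pow]
    have := hpos j n; have := hpos j k; have := hpos (j+1) k
    gcongr
  have hF : ∀ n : ℕ, 1 ≤ n → R * (tauP t j n ^ 4 + 1 + xP t d j n ^ 2) ≤
      tauP t (j+k) n ^ 4 + 1 + xP t d (j+k) n ^ 2 := by
    intro n hn
    have h1 := hρ n hn
    have h2 := htr n
    have p1 := hpos j n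
    have p2 := hpos (j+k) n
    have h3 : (tauP t (j+k) n ^ 4 + 1 + xP t d (j+k) n ^ 2) * tauP t j n ^ 2 =
        tauP t (j+k) n ^ 2 * (tauP t j n ^ 4 + 1 + xP t d j n ^ 2) := by
      field_simp at h2
      linear_combination h2
    have h4 : R * (tauP t j n ^ 4 + 1 + xP t d j n ^ 2) * tauP t j n ^ 2 ≤
        (tauP t (j+k) n ^ 4 + 1 + xP t d (j+k) n ^ 2) * tauP t j n ^ 2 := by
      rw [h3]
      have : 0 ≤ tauP t j n ^ 4 + 1 + xP t d j n ^ 2 := by positivity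
      nlinarith
    exact le_of_mul_le_mul_right h4 (by positivity)
  set ε := (R - 1) / (2 * (R + 1)) with hε
  have hε0 : 0 < ε := by apply div_pos <;> linarith
  have hεR : (R + 1) * ε = (R - 1) / 2 := by
    rw [hε]; field_simp
  obtain ⟨N, hN⟩ := (((F_lim hd0 hdC (hτ j hj) hε0).and
    (F_lim hd0 hdC (hτ (j+k) (by omega)) hε0)).and (eventually_ge_atTop 1)).exists_forall_of_atTop
  have hu : ∀ n : ℕ, N ≤ n → (R + 1) / 2 * (1 + d (j+n) ^ 2) ≤ 1 + d (j+k+n) ^ 2 := by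
    intro n hn
    obtain ⟨⟨a1, a2⟩, a3⟩ := hN n hn
    have a4 := hF n a3
    rw [abs_lt] at a1 a2
    have : R * (1 + d (j+n) ^ 2 - ε) ≤ R * (tauP t j n ^ 4 + 1 + xP t d j n ^ 2) := by
      apply mul_le_mul_of_nonneg_left _ (by linarith)
      linarith [a1.1]
    have b1 := sq_nonneg (d (j+n))
    nlinarith [a2.2, mul_nonneg b1 (by linarith : 0 ≤ (R-1)/2)]
  have hm : ∀ m : ℕ, ((R + 1) / 2) ^ m ≤ 1 + d (j + ((N + m * k : ℕ) : ℤ)) ^ 2 := by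
    intro m
    induction m with
    | zero => simpa using sq_nonneg _
    | succ m ih =>
      have h1 := hu (N + m * k) (by omega)
      have h2 : j + ((N + (m+1) * k : ℕ) : ℤ) = j + k + ((N + m * k : ℕ) : ℤ) := by
        push_cast; ring
      rw [h2, pow_succ]
      refine le_trans ?_ h1
      rw [mul_comm]
      exact mul_le_mul_of_nonneg_left ih (by linarith)
  obtain ⟨m, hmm⟩ := pow_unbounded_of_one_lt (1 + C^2) (by linarith : 1 < (R+1)/2)
  have h1 := hm m
  have h2 := hd0 (j + ((N + m * k : ℕ) : ℤ))
  have h3 := hdC (j + ((N + m * k : ℕ) : ℤ))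
  nlinarith

include h1 h2 in
lemma core (hd0 : ∀ n, 0 < d n) {C : ℝ} (hdC : ∀ n, d n ≤ C) (ht : ∀ n, 0 < t n)
    (hmono : ∀ i j, 0 ≤ i → i < j → t i < t j)
    (hτ : ∀ i, 0 ≤ i → Tendsto (tauP t i) atTop (𝓝 0))
    (hc : ∀ j, ¬ (d (j+1) = t j ^ 2 * d j ∧ d (j+2) = t (j+1) ^ 2 * d (j+1))) :
    ∃ l : ℂ, ∀ i j, P i j = if i = j then l • 1 else 0 := by
  have ht' : ∀ n, t n ≠ 0 := fun n => (ht n).ne'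
  have hstep : ∀ i, IsUnit (stepM t d i) := fun i => by
    rw [Matrix.isUnit_iff_isUnit_det, det_step t d ht']; exact isUnit_one
  -- the diagonal value
  obtain ⟨l, hl⟩ : ∃ l : ℂ, (P 0 0 - l • 1).det = 0 := by
    obtain ⟨l, hl⟩ := Module.End.exists_eigenvalue (Matrix.toLin' (P 0 0))
    obtain ⟨v, hv⟩ := hl.exists_hasEigenvector
    refine ⟨l, Matrix.exists_mulVec_eq_zero_iff.mp ⟨v, hv.2, ?_⟩⟩
    have := hv.apply_eq_smul
    rw [Matrix.toLin'_apply] at this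
    rw [Matrix.sub_mulVec, this, Matrix.smul_mulVec, Matrix.one_mulVec, sub_self]
  let P' : ℤ → ℤ → Matrix (Fin 2) (Fin 2) ℂ := fun i j => P i j - if i = j then l • 1 else 0
  have h1' : ∀ i j, P' (i+1) (j+1) * stepM t d j = stepM t d i * P' i j := by
    intro i j
    simp only [P', add_left_inj]
    split_ifs with h
    · subst h; simp [sub_mul, mul_sub, h1]
    · simp [h1]
  have h2' : ∀ i j, P' i j * (stepM t d j).conjTranspose =
      (stepM t d i).conjTranspose * P' (i+1) (j+1) := by
    intro i j
    simp only [P', add_left_inj]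
    split_ifs with h
    · subst h; simp [sub_mul, mul_sub, h2]
    · simp [h2]
  have hdet0 : ∀ i j, 0 ≤ i → 0 ≤ j → (P' i j).det = 0 := by
    intro i j hi hj
    by_contra hne
    have hG := fun n => trace_eq (P' i j) (fam_gram ht' h1' h2' i j n) hne
    rcases lt_trichotomy i j with h | h | h
    · obtain ⟨k, rfl⟩ : ∃ k : ℕ, j = i + k := ⟨(j-i).toNat, by omega⟩
      exact trace_contra hd0 hdC ht hmono hτ hi (by omega) fun n => (hG n).symm
    · subst h
      obtain ⟨m, rfl⟩ : ∃ m : ℕ, i = 0 + m := ⟨i.toNat, by omega⟩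
      apply hne
      rw [fam_det_n ht' h1' 0 0 m]
      simpa [P'] using hl
    · obtain ⟨k, rfl⟩ : ∃ k : ℕ, i = j + k := ⟨(i-j).toNat, by omega⟩
      exact trace_contra hd0 hdC ht hmono hτ hj (by omega) fun n => (hG n)
  have hz : ∀ i j, 0 ≤ i → 0 ≤ j → P' i j = 0 := fun i j hi hj =>
    sing_zero hd0 hdC ht' (hτ j hj) (hc j) _ (fam_gram ht' h1' h2' i j) (hdet0 i j hi hj)
  have hback : ∀ (m : ℕ) i j, P' (i+m) (j+m) = 0 → P' i j = 0 := by
    intro m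
    induction m with
    | zero => intro i j h; simpa using h
    | succ m ih =>
      intro i j h
      apply ih
      have e := h1' (i+m) (j+m)
      push_cast at h
      rw [add_assoc, add_assoc, h, zero_mul] at e
      exact ((hstep _).mul_right_eq_zero).mp e.symm
  refine ⟨l, fun i j => ?_⟩
  have := hback (i.natAbs + j.natAbs) i j (hz _ _ (by omega) (by omega))
  exact sub_eq_zero.mp this

end fam

lemma tau_lim {a b : ℝ} (ha : 0 < a) (hab : a < b) (hb : b < 1) {t : ℤ → ℝ}
    (htdef : ∀ n : ℤ, t n = Real.sqrt (((n : ℝ) + a) / ((n : ℝ) + b))) (i : ℤ) (hi : 0 ≤ i) :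
    Tendsto (tauP t i) atTop (𝓝 0) := by
  obtain ⟨i, rfl⟩ := Int.eq_ofNat_of_zero_le hi
  have hb0 : 0 < b := ha.trans hab
  have hsum : Tendsto (fun n : ℕ => - ((b-a)/(2*(i+1)) * ∑ m ∈ Finset.range n, (1:ℝ)/(m+1)))
      atTop atBot := by
    apply tendsto_neg_atTop_atBot.comp
    apply Tendsto.const_mul_atTop
    · apply div_pos <;> [linarith; positivity]
    · exact Real.tendsto_sum_range_one_div_nat_succ_atTop
  have hexp := Real.tendsto_exp_atBot.comp hsum
  refine squeeze_zero (fun n => Finset.prod_nonneg fun m _ => ?_) (fun n => ?_) hexp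
  · rw [htdef]; positivity
  · simp only [Function.comp]
    rw [Finset.mul_sum, ← Finset.sum_neg_distrib, Real.exp_sum]
    apply Finset.prod_le_prod
    · intro m _; rw [htdef]; positivity
    · intro m _
      rw [htdef]
      apply Real.sqrt_le_iff.mpr
      refine ⟨by positivity, ?_⟩
      rw [← Real.exp_nat_mul]
      refine le_trans ?_ (Real.add_one_le_exp _)
      push_cast
      have e : ((i:ℝ) + m + a) / (i + m + b) = 1 - (b-a)/(i+m+b) := by
        have : (i:ℝ) + m + b ≠ 0 := by positivity
        field_simp; ring
      rw [e]
      have h2 : (b-a)/(((i:ℝ)+1)*(m+1)) ≤ (b-a)/(i+m+b) := by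
        apply div_le_div_of_nonneg_left (by linarith) (by positivity)
        nlinarith [mul_nonneg (Nat.cast_nonneg (α := ℝ) i) (Nat.cast_nonneg (α := ℝ) m)]
      have h3 : (2:ℝ) * -((b-a)/(2*(i+1)) * (1/(m+1))) = -((b-a)/(((i:ℝ)+1)*(m+1))) := by
        field_simp
      rw [h3]; linarith

end

section ops
open ComplexConjugate

def bas (n : ℤ) (k : Fin 2) : H2 :=
  if k = 0 then WithLp.toLp 2 (eb n, 0) else WithLp.toLp 2 (0, eb n)

lemma inner_eb (n : ℤ) (x : Hl) : inner ℂ (eb n) x = x n := by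
  rw [eb, lp.inner_single_left]; simp

lemma inner_bas_zero (n : ℤ) (z : H2) : inner ℂ (bas n 0) z = z.fst n := by
  simp [bas, WithLp.prod_inner_apply, inner_eb]

lemma inner_bas_one (n : ℤ) (z : H2) : inner ℂ (bas n 1) z = z.snd n := by
  simp [bas, WithLp.prod_inner_apply, inner_eb]

lemma bas_ext (z : H2) (h : ∀ n k, inner ℂ (bas n k) z = 0) : z = 0 := by
  have h1 : z.fst = 0 := by
    ext n; rw [← inner_bas_zero, h]; rfl
  have h2 : z.snd = 0 := by
    ext n; rw [← inner_bas_one, h]; rfl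
  exact WithLp.ofLp_injective 2 (Prod.ext h1 h2)

lemma bas_ext2 (z z' : H2) (h : ∀ n k, inner ℂ (bas n k) z = inner ℂ (bas n k) z') : z = z' := by
  rw [← sub_eq_zero]
  exact bas_ext _ fun n k => by rw [inner_sub_right, h, sub_self]

lemma eb_apply (n m : ℤ) : (eb n : Hl) m = if m = n then 1 else 0 := by
  simp [eb, lp.single_apply, Pi.single_apply]

lemma bas_orth (n m : ℤ) (k l : Fin 2) :
    inner ℂ (bas n k) (bas m l) = if n = m ∧ k = l then (1:ℂ) else 0 := by
  fin_cases k
  · simp only [Fin.zero_eta, inner_bas_zero]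
    fin_cases l <;> simp [bas, eb_apply]
  · simp only [Fin.mk_one, inner_bas_one]
    fin_cases l <;> simp [bas, eb_apply]

variable {t d : ℤ → ℝ} {T0 T1 X : Hl →L[ℂ] Hl}
    (hT0 : ∀ n : ℤ, T0 (eb n) = (t n : ℂ) • eb (n + 1))
    (hT1 : ∀ n : ℤ, T1 (eb n) = ((t n : ℂ))⁻¹ • eb (n + 1))
    (hX : ∀ n : ℤ, X (eb n) = (d n : ℂ) • eb n)

include hT0 hT1 hX in
lemma T_bas (n : ℤ) (k : Fin 2) :
    blockT T0 T1 X (bas n k) = ∑ l, stepM t d n l k • bas (n+1) l := by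
  apply WithLp.ofLp_injective 2
  fin_cases k
  · simp [blockT, blockT2, bas, stepM, Fin.sum_univ_two, hT0, -Complex.coe_smul]
  · simp [blockT, blockT2, bas, stepM, Fin.sum_univ_two, hT0, hT1, hX, smul_smul, sub_smul,
      -Complex.coe_smul]
    ring_nf

include hT0 hT1 hX in
lemma Ts_bas (n : ℤ) (k : Fin 2) :
    ContinuousLinearMap.adjoint (blockT T0 T1 X) (bas (n+1) k) =
      ∑ l, conj (stepM t d n k l) • bas n l := by
  apply bas_ext2
  intro m l
  rw [ContinuousLinearMap.adjoint_inner_right, T_bas hT0 hT1 hX, sum_inner, inner_sum]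
  simp only [inner_smul_left, inner_smul_right, bas_orth, add_left_inj]
  by_cases h : m = n
  · subst h; fin_cases k <;> fin_cases l <;> simp [Fin.sum_univ_two]
  · simp [h]

include hT0 hT1 hX in
lemma irred_of_core
    (hcore : ∀ P : ℤ → ℤ → Matrix (Fin 2) (Fin 2) ℂ,
      (∀ i j, P (i+1) (j+1) * stepM t d j = stepM t d i * P i j) →
      (∀ i j, P i j * (stepM t d j).conjTranspose =
        (stepM t d i).conjTranspose * P (i+1) (j+1)) →
      ∃ l : ℂ, ∀ i j, P i j = if i = j then l • 1 else 0) :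
    IsIrreducibleOp (blockT T0 T1 X) := by
  intro K hK hKT hKTs
  set T := blockT T0 T1 X with hT
  set S := ContinuousLinearMap.adjoint T with hS
  have : CompleteSpace K := hK.completeSpace_coe
  have hcomm : ∀ A B : H2 →L[ℂ] H2, (∀ x y, inner ℂ (B x) y = inner ℂ x (A y)) →
      (∀ x ∈ K, A x ∈ K) → (∀ x ∈ K, B x ∈ K) →
      ∀ x, K.starProjection (A x) = A (K.starProjection x) := by
    intro A B hAB hA hB x
    apply Submodule.eq_starProjection_of_mem_orthogonal
    · exact hA _ (K.starProjection_apply_mem x)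
    · rw [← map_sub, Submodule.mem_orthogonal]
      intro u hu
      rw [← hAB]
      exact (Submodule.mem_orthogonal _ _).mp (K.sub_starProjection_mem_orthogonal x) _ (hB u hu)
  have hPT := hcomm T S (fun x y => ContinuousLinearMap.adjoint_inner_left T y x) hKT hKTs
  have hPS := hcomm S T (fun x y => (ContinuousLinearMap.adjoint_inner_right T x y).symm) hKTs hKT
  obtain ⟨l, hl⟩ := hcore
    (fun i j => Matrix.of fun k m => inner ℂ (bas i k) (K.starProjection (bas j m)))
    (by
      intro i j
      ext k m
      have e : inner ℂ (bas (i+1) k) (K.starProjection (T (bas j m))) =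
        inner ℂ (S (bas (i+1) k)) (K.starProjection (bas j m)) := by
        rw [hPT, hS, ContinuousLinearMap.adjoint_inner_left]
      rw [hS, hT, T_bas hT0 hT1 hX, Ts_bas hT0 hT1 hX] at e
      simp only [map_sum, map_smul, sum_inner, inner_sum, inner_smul_left, inner_smul_right,
        Complex.conj_conj] at e
      simp only [Matrix.mul_apply, Matrix.of_apply]
      rw [← e]
      exact Finset.sum_congr rfl fun _ _ => mul_comm _ _)
    (by
      intro i j
      ext k m
      have e : inner ℂ (bas i k) (K.starProjection (S (bas (j+1) m))) =
        inner ℂ (T (bas i k)) (K.starProjection (bas (j+1) m)) := by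
        rw [hPS, hS, ContinuousLinearMap.adjoint_inner_right]
      rw [hS, hT, T_bas hT0 hT1 hX, Ts_bas hT0 hT1 hX] at e
      simp only [map_sum, map_smul, sum_inner, inner_sum, inner_smul_left, inner_smul_right] at e
      simp only [Matrix.mul_apply, Matrix.of_apply, Matrix.conjTranspose_apply]
      simp only [← starRingEnd_apply]
      rw [← e]
      exact Finset.sum_congr rfl fun _ _ => mul_comm _ _)
  have hP : ∀ n k, K.starProjection (bas n k) = l • bas n k := by
    intro n k
    apply bas_ext2
    intro m k'
    have := congrFun (congrFun (hl m n) k') k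
    simp only [Matrix.of_apply] at this
    rw [this, inner_smul_right, bas_orth]
    by_cases h : m = n <;> simp [h, Matrix.one_apply]
  have horth : ∀ L : Submodule ℂ H2, (∀ n k, bas n k ∈ L) → Lᗮ = ⊥ := by
    intro L hL
    rw [eq_bot_iff]
    intro z hz
    exact bas_ext z fun n k => (Submodule.mem_orthogonal _ _).mp hz _ (hL n k)
  by_cases h0 : l = 0
  · left
    have h1 : ∀ n k, bas n k ∈ Kᗮ := by
      intro n k
      rw [← Submodule.starProjection_apply_eq_zero_iff, hP, h0, zero_smul]
    have := horth _ h1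
    rwa [Submodule.orthogonal_orthogonal] at this
  · right
    have h1 : ∀ n k, bas n k ∈ K := by
      intro n k
      have := K.starProjection_apply_mem (bas n k)
      rw [hP] at this
      simpa [smul_smul, h0] using K.smul_mem l⁻¹ this
    exact (Submodule.orthogonal_eq_bot_iff).mp (horth _ h1)

end ops

lemma frac_pos {a b : ℝ} (ha : 0 < a) (ha1 : a < 1) (hb0 : 0 < b) (hb : b < 1) (n : ℤ) :
    0 < ((n : ℝ) + a) / ((n : ℝ) + b) := by
  rcases le_or_gt 0 n with h | h
  · have : (0:ℝ) ≤ n := by exact_mod_cast h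
    positivity
  · have : (n:ℝ) ≤ -1 := by exact_mod_cast (by omega : n ≤ -1)
    exact div_pos_of_neg_of_neg (by linarith) (by linarith)

/-- Example 3.5: irreducibility of `T(√((n+a)/(n+b)), dₙ)`. -/
theorem irreducibility_example_sqrt_weights
    (a b : ℝ) (ha : 0 < a) (hab : a < b) (hb : b < 1) (hsum : a + b = 1)
    (d : ℤ → ℝ) (hdpos : ∀ n, 0 < d n) (hdb : ∃ C : ℝ, ∀ n, d n ≤ C)
    (t : ℤ → ℝ) (htdef : ∀ n : ℤ, t n = Real.sqrt (((n : ℝ) + a) / ((n : ℝ) + b)))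
    (c : ℤ → ℝ) (hcdef : ∀ n : ℤ,
      c n = Real.sqrt (((n : ℝ) + 1 - a) / ((n : ℝ) + 1 - b)) * d (n + 1) -
        Real.sqrt (((n : ℝ) + a) / ((n : ℝ) + b)) * d n)
    (T0 T1 X : Hl →L[ℂ] Hl)
    (hT0 : ∀ n : ℤ, T0 (eb n) = (t n : ℂ) • eb (n + 1))
    (hT1 : ∀ n : ℤ, T1 (eb n) = ((t n : ℂ))⁻¹ • eb (n + 1))
    (hX : ∀ n : ℤ, X (eb n) = (d n : ℂ) • eb n)
    (hXT : X.comp T1 ≠ T0.comp X)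
    (hsymm : ∀ n : ℤ, d n = d (-n))
    (hcond : ∀ n : ℤ,
      Real.sqrt (((n : ℝ) + a) / ((n : ℝ) + b)) * c n *
          ((1 + d n ^ 2) * (((n : ℝ) - a) / ((n : ℝ) - b)) +
            (1 + d (n - 1) ^ 2) * (((n : ℝ) - b) / ((n : ℝ) - a)) -
            2 * d (n - 1) * d n) ≠
        Real.sqrt (((n : ℝ) - b) / ((n : ℝ) - a)) * c (n - 1) *
          ((1 - d n ^ 2) * (((n : ℝ) + a) / ((n : ℝ) + b)) -
            (1 + d (n + 1) ^ 2) * (((n : ℝ) + b) / ((n : ℝ) + a)) +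
            2 * d n * d (n + 1))) :
    IsIrreducibleOp (blockT T0 T1 X) := by
  have hb0 : 0 < b := ha.trans hab
  have ha1 : a < 1 := hab.trans hb
  have hfr := frac_pos ha ha1 hb0 hb
  have ht : ∀ n, 0 < t n := fun n => by rw [htdef]; exact Real.sqrt_pos.mpr (hfr n)
  obtain ⟨C, hdC⟩ := hdb
  have hmono : ∀ i j, 0 ≤ i → i < j → t i < t j := by
    intro i j hi hij
    rw [htdef, htdef]
    apply Real.sqrt_lt_sqrt (hfr i).le
    have h1 : (0:ℝ) ≤ i := by exact_mod_cast hi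
    have h2 : (i:ℝ) < j := by exact_mod_cast hij
    rw [div_lt_div_iff₀ (by linarith) (by linarith)]
    nlinarith
  have hcz : ∀ n, d (n+1) = t n ^ 2 * d n → c n = 0 := by
    intro n hn
    have e : ((n : ℝ) + 1 - a) / ((n : ℝ) + 1 - b) = (((n : ℝ) + a) / ((n : ℝ) + b))⁻¹ := by
      rw [inv_div]; congr 1 <;> linarith
    rw [hcdef, e, Real.sqrt_inv, ← htdef, hn]
    have := (ht n).ne'
    field_simp; ring
  refine irred_of_core hT0 hT1 hX fun P h1 h2 =>
    core h1 h2 hdpos hdC ht hmono (fun i hi => tau_lim ha hab hb htdef i hi) ?_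
  rintro j ⟨e1, e2⟩
  have z1 := hcz j e1
  have z2 := hcz (j+1) (by rw [← e2]; congr 1; ring)
  apply hcond (j+1)
  rw [z2, add_sub_cancel_right, z1]
  simp
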